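/- Let E ⊂ ℝ^{N×n} be a compact set and let U be an open and bounded subset of ℝ^{N×n} containing Rco_f E. Then Rco_f E equals the set of all ξ ∈ ℝ^{N×n} such that for every ε > 0 there exist I ∈ ℕ and pairs (λ_i, ξ_i), i = 1,…,I, with λ_i > 0, Σ_{i=1}^I λ_i = 1, satisfying (H_I(U)), such that ξ = Σ_{i=1}^I λ_i ξ_i and Σ_{i : ξ_i ∉ B_ε(E)} λ_i < ε. -/

import Mathlib

open MeasureTheory Filter

attribute [local instance] Classical.propDecidable
attribute [local instance] Matrix.frobeniusNormedAddCommGroup Matrix.frobeniusNormedSpace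

noncomputable section

/-- The space of real `N × n` matrices. -/
abbrev Mat (N n : ℕ) : Type := Matrix (Fin N) (Fin n) ℝ

/-- A function `f : ℝ^{N×n} → ℝ` is rank one convex. -/
def RankOneConvexFun {N n : ℕ} (f : Mat N n → ℝ) : Prop :=
  ∀ lam ∈ Set.Icc (0:ℝ) 1, ∀ ξ η : Mat N n, (ξ - η).rank = 1 →
    f (lam • ξ + (1 - lam) • η) ≤ lam * f ξ + (1 - lam) * f η

/-- The hull `Rco_f E`. -/
def RcoF {N n : ℕ} (E : Set (Mat N n)) : Set (Mat N n) :=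
  {ξ | ∀ f : Mat N n → ℝ, RankOneConvexFun f → (∀ η ∈ E, f η ≤ 0) → f ξ ≤ 0}

/-- A set of matrices is rank one convex. -/
def RankOneConvexSet {N n : ℕ} (S : Set (Mat N n)) : Prop :=
  ∀ A ∈ S, ∀ B ∈ S, (A - B).rank = 1 → ∀ t ∈ Set.Icc (0:ℝ) 1, t • A + (1 - t) • B ∈ S

/-- The property `(H_I(U))`, phrased on lists of (weight, matrix) pairs. -/
inductive HIProp {N n : ℕ} (U : Set (Mat N n)) : List (ℝ × Mat N n) → Prop where
  | single (l : ℝ) (ξ : Mat N n) (hξ : ξ ∈ U) : HIProp U [(l, ξ)]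
  | pair (l₁ l₂ : ℝ) (ξ₁ ξ₂ : Mat N n) (h₁ : ξ₁ ∈ U) (h₂ : ξ₂ ∈ U)
      (hrank : (ξ₁ - ξ₂).rank = 1) : HIProp U [(l₁, ξ₁), (l₂, ξ₂)]
  | step (L rest : List (ℝ × Mat N n)) (l₁ l₂ : ℝ) (ξ₁ ξ₂ : Mat N n)
      (hperm : L.Perm ((l₁, ξ₁) :: (l₂, ξ₂) :: rest)) (hrest : rest ≠ [])
      (h₁ : ξ₁ ∈ U) (h₂ : ξ₂ ∈ U) (hrank : (ξ₁ - ξ₂).rank = 1)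
      (hrec : HIProp U ((l₁ + l₂, ((l₁ + l₂)⁻¹) • (l₁ • ξ₁ + l₂ • ξ₂)) :: rest)) :
      HIProp U L

/-- The family `(λ_i, ξ_i)_{1 ≤ i ≤ I}` satisfies `(H_I(U))`. -/
def SatisfiesH {N n : ℕ} (U : Set (Mat N n)) (I : ℕ) (l : Fin I → ℝ)
    (ξ : Fin I → Mat N n) : Prop :=
  HIProp U (List.ofFn fun i => (l i, ξ i))

/-- The gradient of a map `u : ℝ^n → ℝ^N`, as an `N × n` matrix. -/
def matGrad {N n : ℕ} (u : (Fin n → ℝ) → Fin N → ℝ) (x : Fin n → ℝ) : Mat N n :=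
  LinearMap.toMatrix' (fderiv ℝ u x).toLinearMap

/-- `u` is affine on the set `s`. -/
def AffineOn {N n : ℕ} (u : (Fin n → ℝ) → Fin N → ℝ) (s : Set (Fin n → ℝ)) : Prop :=
  ∃ (A : Mat N n) (b : Fin N → ℝ), ∀ x ∈ s, u x = A.mulVec x + b

/-- `u` is piecewise affine on the open set `Ω`. -/
def PiecewiseAffineOn {N n : ℕ} (u : (Fin n → ℝ) → Fin N → ℝ)
    (Ω : Set (Fin n → ℝ)) : Prop :=
  ContinuousOn u (closure Ω) ∧
  ∃ P : ℕ → Set (Fin n → ℝ),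
    (∀ k, IsOpen (P k)) ∧ (∀ k, P k ⊆ Ω) ∧
    (∀ k l, k ≠ l → Disjoint (P k) (P l)) ∧
    volume (Ω \ ⋃ k, P k) = 0 ∧ ∀ k, AffineOn u (P k)

/-- `u` is piecewise `C¹` on the open set `Ω`. -/
def PiecewiseC1On {N n : ℕ} (u : (Fin n → ℝ) → Fin N → ℝ)
    (Ω : Set (Fin n → ℝ)) : Prop :=
  ContinuousOn u (closure Ω) ∧
  ∃ P : ℕ → Set (Fin n → ℝ),
    (∀ k, IsOpen (P k)) ∧ (∀ k, P k ⊆ Ω) ∧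
    (∀ k l, k ≠ l → Disjoint (P k) (P l)) ∧
    volume (Ω \ ⋃ k, P k) = 0 ∧ ∀ k, ContDiffOn ℝ 1 u (P k)

/-- `u ∈ φ + W₀^{1,∞}(Ω; ℝ^N)`: `u` is Lipschitz on `closure Ω` and agrees with `φ`
on the boundary of `Ω`. -/
def MemW01inf {N n : ℕ} (Ω : Set (Fin n → ℝ)) (φ u : (Fin n → ℝ) → Fin N → ℝ) : Prop :=
  (∃ C : NNReal, LipschitzOnWith C u (closure Ω)) ∧ ∀ x ∈ frontier Ω, u x = φ x

/-- `K` has the relaxation property with respect to `E`. -/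
def HasRelaxationProperty {N n : ℕ} (K E : Set (Mat N n)) : Prop :=
  ∀ Ω : Set (Fin n → ℝ), IsOpen Ω → Bornology.IsBounded Ω →
    ∀ ξ ∈ K, ∀ b : Fin N → ℝ,
      ∃ u : ℕ → (Fin n → ℝ) → Fin N → ℝ,
        (∀ ν, PiecewiseAffineOn (u ν) Ω) ∧
        (∀ ν, MemW01inf Ω (fun x => ξ.mulVec x + b) (u ν)) ∧
        (∀ ν, ∀ᵐ x ∂(volume.restrict Ω), matGrad (u ν) x ∈ E ∪ K) ∧
        (∃ C : NNReal, ∀ ν, LipschitzOnWith C (u ν) (closure Ω)) ∧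
        TendstoUniformlyOn u (fun x => ξ.mulVec x + b) atTop (closure Ω) ∧
        Tendsto (fun ν => ∫ x in Ω, Metric.infDist (matGrad (u ν) x) E) atTop (nhds 0)

/-- The singular values of a square matrix, in nondecreasing order:
the square roots of the eigenvalues of `ξ ξᵀ`, sorted. -/
def singularValues {n : ℕ} (ξ : Matrix (Fin n) (Fin n) ℝ) (i : Fin n) : ℝ :=
  Real.sqrt ((Matrix.isHermitian_mul_conjTranspose_self ξ).eigenvalues
    (Tuple.sort (Matrix.isHermitian_mul_conjTranspose_self ξ).eigenvalues i))

end

section Statements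

open Metric Set

/-! Fix a bounded function `φ` on `U` and let `g x` be the infimum of `∑ λ_i φ(ξ_i)` over all
laminates in `U` with barycenter `x`. Grafting laminates of two rank one connected points of `U`
onto the pair they form shows that `g` is rank one convex between points of `U`. Since `∂U` is
compact and misses `Rco_f E`, finitely many rank one convex functions which are nonpositive on `E`
combine, after scaling, into a maximum `h` with `h > sup φ` on `∂U`. Then `h` beats `g` near `∂U`,
so `max g h`, continued by `h` outside `U`, is rank one convex on the whole space; if `φ ≤ 0` on `E`
it is nonpositive on `E`, hence on `Rco_f E`. For `φ` the indicator of the complement of `B_ε(E)`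
this gives laminates with arbitrarily little mass far from `E`.

Conversely, let `f` be rank one convex with `f ≤ 0` on `E`. By Jensen's inequality along a laminate,
`f ξ ≤ ∑ λ_i f(ξ_i)`; as `f` is continuous, `f(ξ_i)` is at most a small constant for `ξ_i` near `E`,
and it is bounded on `U`, so the remaining terms contribute little. -/

theorem exists_mem_inter_of_frontier_subset {X : Type*} [TopologicalSpace X] {C U V : Set X}
    (hC : IsPreconnected C) (hU : IsOpen U) (hV : IsOpen V) (hUV : frontier U ⊆ V)
    (hCU : (C ∩ U).Nonempty) (hCU' : (C ∩ Uᶜ).Nonempty) : ∃ x ∈ C, x ∈ U ∧ x ∈ V := by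
  have hcompl : Uᶜ ⊆ V ∪ (closure U)ᶜ := fun x hx ↦
    (em (x ∈ closure U)).imp (fun hx' ↦ hUV (hU.frontier_eq ▸ ⟨hx', hx⟩)) id
  obtain ⟨x, hxC, hxU, hx⟩ := hC U (V ∪ (closure U)ᶜ) hU (hV.union isClosed_closure.isOpen_compl)
    (fun x _ ↦ (em (x ∈ U)).imp id (@hcompl x)) hCU (hCU'.mono (inter_subset_inter_right C hcompl))
  exact ⟨x, hxC, hxU, hx.resolve_right (not_not_intro (subset_closure hxU))⟩

theorem exists_mem_uIcc_le_of_lt_frontier {X : Type*} [TopologicalSpace X] {U : Set X}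
    {g h : X → ℝ} {γ : ℝ → X} {ℓ : ℝ → ℝ} {M t e : ℝ} (hU : IsOpen U) (hh : Continuous h)
    (hgM : ∀ x ∈ U, g x ≤ M) (hM : ∀ x ∈ frontier U, M < h x) (hγ : Continuous γ)
    (hhℓ : ∀ s ∈ uIcc t e, h (γ s) ≤ ℓ s) (ht : γ t ∈ U) (he : γ e ∈ U → g (γ e) ≤ ℓ e) :
    ∃ s ∈ uIcc t e, γ s ∈ U ∧ g (γ s) ≤ ℓ s := by
  by_cases heU : γ e ∈ U
  · exact ⟨e, right_mem_uIcc, heU, he heU⟩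
  -- Just before the path leaves `U`, it is still in `U` and already `h > M ≥ g`.
  obtain ⟨_, ⟨s, hs, rfl⟩, hsU, hsM⟩ := exists_mem_inter_of_frontier_subset
    (isPreconnected_uIcc.image γ hγ.continuousOn) hU (isOpen_lt continuous_const hh) hM
    ⟨_, mem_image_of_mem γ left_mem_uIcc, ht⟩ ⟨_, mem_image_of_mem γ right_mem_uIcc, heU⟩
  exact ⟨s, hs, hsU, (hgM _ hsU).trans <| hsM.le.trans <| hhℓ s hs⟩

theorem abs_sub_le_of_convexOn_univ {V : Type*} [AddCommGroup V] [Module ℝ V] {g : V → ℝ}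
    (hg : ConvexOn ℝ univ g) (x v : V) {s : ℝ} (hs : |s| ≤ 1) :
    |g (x + s • v) - g x| ≤ |s| * (max (g (x + v)) (g (x - v)) - g x) := by
  wlog hs₀ : 0 ≤ s generalizing v s
  · simpa [max_comm, ← sub_eq_add_neg] using
      this (-v) (s := -s) (by rwa [abs_neg]) (neg_nonneg.2 (not_le.1 hs₀).le)
  rw [abs_of_nonneg hs₀] at hs ⊢
  have hup : g (x + s • v) ≤ (1 - s) * g x + s * g (x + v) := by
    have h := hg.2 (mem_univ x) (mem_univ (x + v)) (sub_nonneg.2 hs) hs₀ (sub_add_cancel 1 s)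
    rwa [show (1 - s) • x + s • (x + v) = x + s • v by module] at h
  -- `x` divides the segment from `x + s • v` to `x - v` in the ratio `s : 1`.
  have hlow : (1 + s) * g x ≤ g (x + s • v) + s * g (x - v) := by
    have h := hg.2 (mem_univ (x + s • v)) (mem_univ (x - v))
      (show 0 ≤ (1 + s)⁻¹ by positivity) (show 0 ≤ (1 + s)⁻¹ * s by positivity) (by field_simp)
    have hx : (1 + s)⁻¹ • (x + s • v) + ((1 + s)⁻¹ * s) • (x - v) = x := by
      match_scalars <;> field_simp
      ring
    rw [hx, smul_eq_mul, smul_eq_mul, mul_assoc, ← mul_add] at h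
    exact (le_inv_mul_iff₀ (by positivity)).1 h
  have hmax_add := mul_le_mul_of_nonneg_left (le_max_left (g (x + v)) (g (x - v))) hs₀
  have hmax_sub := mul_le_mul_of_nonneg_left (le_max_right (g (x + v)) (g (x - v))) hs₀
  exact abs_le.2 ⟨by linarith, by linarith⟩

theorem continuous_uncurry_of_convexOn_univ {X : Type*} [TopologicalSpace X] {f : X → ℝ → ℝ}
    (hcont : ∀ t, Continuous fun x ↦ f x t) (hconv : ∀ x, ConvexOn ℝ univ (f x)) :
    Continuous fun p : X × ℝ ↦ f p.1 p.2 := by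
  refine continuous_iff_continuousAt.2 fun ⟨x₀, t₀⟩ ↦ ?_
  let bound : X × ℝ → ℝ := fun p ↦
    |p.2 - t₀| * (max (f p.1 (t₀ + 1)) (f p.1 (t₀ - 1)) - f p.1 t₀)
  have hbound : Tendsto bound (nhds (x₀, t₀)) (nhds 0) := by
    have hc : Continuous bound := by fun_prop
    simpa [bound] using hc.tendsto (x₀, t₀)
  have hnear : ∀ᶠ p : X × ℝ in nhds (x₀, t₀), |p.2 - t₀| ≤ 1 := by
    have hc : Continuous fun p : X × ℝ ↦ |p.2 - t₀| := by fun_prop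
    exact hc.continuousAt.eventually_le_const (by simp)
  have hdiff : Tendsto (fun p : X × ℝ ↦ f p.1 p.2 - f p.1 t₀) (nhds (x₀, t₀)) (nhds 0) := by
    refine squeeze_zero_norm' (hnear.mono fun p hp ↦ ?_) hbound
    simpa using abs_sub_le_of_convexOn_univ (hconv p.1) t₀ 1 hp
  have hfix : Tendsto (fun p : X × ℝ ↦ f p.1 t₀) (nhds (x₀, t₀)) (nhds (f x₀ t₀)) :=
    ((hcont t₀).comp continuous_fst).tendsto (x₀, t₀)
  simpa [ContinuousAt] using hdiff.add hfix

theorem continuous_of_convexOn_update {ι : Type*} [Finite ι] [DecidableEq ι] {f : (ι → ℝ) → ℝ}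
    (hf : ∀ a i, ConvexOn ℝ univ fun t ↦ f (Function.update a i t)) : Continuous f := by
  cases nonempty_fintype ι
  suffices ∀ (s : Finset ι) (a : ι → ℝ), Continuous fun y ↦ f (s.piecewise y a) by
    simpa using this Finset.univ 0
  intro s
  induction s using Finset.induction_on with
  | empty => simp [continuous_const]
  | insert i s hi ih =>
    intro a
    have hjoint : Continuous fun p : (ι → ℝ) × ℝ ↦ f (s.piecewise p.1 (Function.update a i p.2)) :=
      continuous_uncurry_of_convexOn_univ (fun t ↦ ih (Function.update a i t)) fun y ↦ by
        simpa only [s.update_piecewise_of_notMem y a hi] using hf (s.piecewise y a) i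
    have hdiag := hjoint.comp (continuous_id.prodMk (continuous_apply i))
    simpa only [Finset.piecewise_insert, s.update_piecewise_of_notMem _ a hi,
      Function.comp_def, id] using hdiag

theorem rank_single_one {K m n : Type*} [Field K] [Finite m] [Fintype n] [DecidableEq m]
    [DecidableEq n] (i : m) (j : n) : (Matrix.single i j (1 : K)).rank = 1 := by
  refine le_antisymm ?_ (Submodule.one_le_finrank_iff.2 fun hbot ↦ ?_)
  · rw [Matrix.single_eq_single_vecMulVec_single]
    exact Matrix.rank_vecMulVec_le _ _
  · have h := congrFun (LinearMap.congr_fun (LinearMap.range_eq_bot.1 hbot) (Pi.single j 1)) i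
    simp at h

theorem rank_sub_comm {R m n : Type*} [CommRing R] [Fintype n] (A B : Matrix m n R) :
    (A - B).rank = (B - A).rank := by
  rw [← neg_sub, ← neg_one_smul R,
    Matrix.rank_smul_of_mem_nonZeroDivisors _ isUnit_one.neg.mem_nonZeroDivisors]

section RankOneConvex

variable {N n : ℕ} {f g : Mat N n → ℝ} {U : Set (Mat N n)}

theorem RankOneConvexFun.convexOn_line (hf : RankOneConvexFun f) (A : Mat N n) {R : Mat N n}
    (hR : R.rank = 1) : ConvexOn ℝ univ fun t : ℝ ↦ f (A + t • R) := by
  refine convexOn_iff_pairwise_pos.2 ⟨convex_univ, fun x _ y _ hxy s t hs ht hst ↦ ?_⟩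
  obtain rfl : t = 1 - s := by linarith
  have hrank : (A + x • R - (A + y • R)).rank = 1 := by
    rwa [add_sub_add_left_eq_sub, ← sub_smul, Matrix.rank_smul_of_mem_nonZeroDivisors _
      (mem_nonZeroDivisors_of_ne_zero (sub_ne_zero.2 hxy))]
  have h := hf s ⟨hs.le, by linarith⟩ _ _ hrank
  rwa [show s • (A + x • R) + (1 - s) • (A + y • R) = A + (s • x + (1 - s) • y) • R by
    module] at h

theorem RankOneConvexFun.continuous (hf : RankOneConvexFun f) : Continuous f := by
  have hentries : Continuous fun a : Fin N × Fin n → ℝ ↦ f (Matrix.of (Function.curry a)) := by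
    refine continuous_of_convexOn_update fun a ⟨i, j⟩ ↦ ?_
    convert hf.convexOn_line (Matrix.of (Function.curry (Function.update a (i, j) 0)))
      (rank_single_one i j) using 3 with t
    ext i' j'
    by_cases h : (i', j') = (i, j)
    · simp_all
    · have h' : ¬(i = i' ∧ j = j') := fun h' ↦ h (by simp [h'])
      simp [Function.update_of_ne h, h']
  have huncurry : Continuous fun (A : Mat N n) (p : Fin N × Fin n) ↦ A p.1 p.2 := by fun_prop
  exact hentries.comp huncurry

theorem rankOneConvexFun_const (c : ℝ) : RankOneConvexFun fun _ : Mat N n ↦ c :=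
  fun _ _ _ _ _ ↦ by rw [← add_mul, add_sub_cancel, one_mul]

theorem RankOneConvexFun.sup (hf : RankOneConvexFun f) (hg : RankOneConvexFun g) :
    RankOneConvexFun (f ⊔ g) := by
  intro t ht ξ η hrank
  have ht₀ : 0 ≤ t := ht.1
  have ht₁ : 0 ≤ 1 - t := sub_nonneg.2 ht.2
  refine max_le ((hf t ht ξ η hrank).trans ?_) ((hg t ht ξ η hrank).trans ?_)
  · gcongr <;> exact le_max_left _ _
  · gcongr <;> exact le_max_right _ _

theorem RankOneConvexFun.const_mul (hf : RankOneConvexFun f) {c : ℝ} (hc : 0 ≤ c) :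
    RankOneConvexFun fun ξ ↦ c * f ξ := fun t ht ξ η hrank ↦
  (mul_le_mul_of_nonneg_left (hf t ht ξ η hrank) hc).trans_eq (by ring)

theorem RankOneConvexFun.add_mul_le (hf : RankOneConvexFun f) {ξ η : Mat N n}
    (hrank : (ξ - η).rank = 1) {a b : ℝ} (ha : 0 < a) (hb : 0 < b) :
    (a + b) * f ((a + b)⁻¹ • (a • ξ + b • η)) ≤ a * f ξ + b * f η := by
  have hab : 0 < a + b := add_pos ha hb
  have h := hf (a / (a + b)) ⟨by positivity, (div_le_one hab).2 (by linarith)⟩ ξ η hrank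
  rw [one_sub_div hab.ne', add_sub_cancel_left] at h
  calc (a + b) * f ((a + b)⁻¹ • (a • ξ + b • η))
      = (a + b) * f ((a / (a + b)) • ξ + (b / (a + b)) • η) := by
        congr 2; match_scalars <;> field_simp
    _ ≤ (a + b) * (a / (a + b) * f ξ + b / (a + b) * f η) := by gcongr
    _ = a * f ξ + b * f η := by field_simp

theorem subset_RcoF (E : Set (Mat N n)) : E ⊆ RcoF E := fun _ hη _ _ hfE ↦ hfE _ hη

theorem exists_rankOneConvexFun_lt_of_disjoint_RcoF {E K : Set (Mat N n)} (hK : IsCompact K)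
    (hdisj : Disjoint K (RcoF E)) (M : ℝ) :
    ∃ h : Mat N n → ℝ, RankOneConvexFun h ∧ (∀ η ∈ E, h η ≤ 0) ∧ ∀ ξ ∈ K, M < h ξ := by
  refine hK.induction_on (p := fun K ↦ ∃ h : Mat N n → ℝ, RankOneConvexFun h ∧
    (∀ η ∈ E, h η ≤ 0) ∧ ∀ ξ ∈ K, M < h ξ) ?_ ?_ ?_ ?_
  · exact ⟨fun _ ↦ 0, rankOneConvexFun_const 0, by simp, by simp⟩
  · rintro s t hst ⟨h, hconv, hE, ht⟩
    exact ⟨h, hconv, hE, fun ξ hξ ↦ ht ξ (hst hξ)⟩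
  · rintro s t ⟨h, hconv, hE, hs⟩ ⟨h', hconv', hE', ht⟩
    refine ⟨_, hconv.sup hconv', fun η hη ↦ max_le (hE η hη) (hE' η hη), ?_⟩
    rintro ξ (hξ | hξ)
    · exact lt_max_of_lt_left (hs ξ hξ)
    · exact lt_max_of_lt_right (ht ξ hξ)
  · intro ξ hξ
    obtain ⟨f, hf, hfE, hfξ⟩ : ∃ f, RankOneConvexFun f ∧ (∀ η ∈ E, f η ≤ 0) ∧ 0 < f ξ := by
      simpa [RcoF] using disjoint_left.1 hdisj hξ
    have hc : 0 ≤ (|M| + 1) / f ξ := by positivity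
    have hconv := hf.const_mul hc
    refine ⟨{η | M < (|M| + 1) / f ξ * f η}, mem_nhdsWithin_of_mem_nhds <|
      (isOpen_lt continuous_const hconv.continuous).mem_nhds ?_, _, hconv,
      fun η hη ↦ mul_nonpos_of_nonneg_of_nonpos hc (hfE η hη), fun η hη ↦ hη⟩
    rw [mem_ofPred_eq, div_mul_cancel₀ _ hfξ.ne']
    linarith [le_abs_self M]

/-- Rank one convexity tested only on pairs of points of `U`; as `U` need not be convex, the
segment joining them, and the point at which the function is bounded, may leave `U`. -/
def RankOneConvexFunOn (U : Set (Mat N n)) (f : Mat N n → ℝ) : Prop :=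
  ∀ t ∈ Icc (0 : ℝ) 1, ∀ ξ ∈ U, ∀ η ∈ U, (ξ - η).rank = 1 →
    f (t • ξ + (1 - t) • η) ≤ t * f ξ + (1 - t) * f η

theorem RankOneConvexFunOn.le_chord (hg : RankOneConvexFunOn U g) {ξ η : Mat N n}
    (hrank : (ξ - η).rank = 1) {a b t A B : ℝ} (hbt : b ≤ t) (hta : t ≤ a)
    (haU : a • ξ + (1 - a) • η ∈ U) (hbU : b • ξ + (1 - b) • η ∈ U)
    (ha : g (a • ξ + (1 - a) • η) ≤ a * A + (1 - a) * B)
    (hb : g (b • ξ + (1 - b) • η) ≤ b * A + (1 - b) * B) :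
    g (t • ξ + (1 - t) • η) ≤ t * A + (1 - t) * B := by
  rcases (hbt.trans hta).eq_or_lt with rfl | hba
  · rwa [le_antisymm hta hbt]
  set r : ℝ := (t - b) / (a - b)
  have hr : r ∈ Icc (0 : ℝ) 1 := by
    have := sub_pos.2 hba
    exact ⟨div_nonneg (sub_nonneg.2 hbt) this.le, (div_le_one this).2 (by linarith)⟩
  have ht : t = r * a + (1 - r) * b := by
    have := (sub_pos.2 hba).ne'
    simp only [r]; field_simp; ring
  have hrank' : (a • ξ + (1 - a) • η - (b • ξ + (1 - b) • η)).rank = 1 := by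
    rwa [show a • ξ + (1 - a) • η - (b • ξ + (1 - b) • η) = (a - b) • (ξ - η) by module,
      Matrix.rank_smul_of_mem_nonZeroDivisors _
        (mem_nonZeroDivisors_of_ne_zero (sub_pos.2 hba).ne')]
  calc g (t • ξ + (1 - t) • η)
      = g (r • (a • ξ + (1 - a) • η) + (1 - r) • (b • ξ + (1 - b) • η)) := by
        rw [ht]; congr 1; module
    _ ≤ r * g (a • ξ + (1 - a) • η) + (1 - r) * g (b • ξ + (1 - b) • η) :=
        hg r hr _ haU _ hbU hrank'
    _ ≤ r * (a * A + (1 - a) * B) + (1 - r) * (b * A + (1 - b) * B) := by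
        have := sub_nonneg.2 hr.2
        have := hr.1
        gcongr
    _ = t * A + (1 - t) * B := by rw [ht]; ring

theorem RankOneConvexFunOn.glue {h : Mat N n → ℝ} {M : ℝ} (hg : RankOneConvexFunOn U g)
    (hU : IsOpen U) (hgM : ∀ ξ ∈ U, g ξ ≤ M) (hh : RankOneConvexFun h)
    (hM : ∀ ξ ∈ frontier U, M < h ξ) :
    RankOneConvexFun (U.piecewise (g ⊔ h) h) := by
  set F := U.piecewise (g ⊔ h) h
  have hF_mem : ∀ {ξ}, ξ ∈ U → F ξ = max (g ξ) (h ξ) := fun hξ ↦ piecewise_eq_of_mem _ _ _ hξ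
  have hF_notMem : ∀ {ξ}, ξ ∉ U → F ξ = h ξ := fun hξ ↦ piecewise_eq_of_notMem _ _ _ hξ
  have hhF : ∀ ξ, h ξ ≤ F ξ := fun ξ ↦ by
    by_cases hξ : ξ ∈ U
    · exact (le_max_right _ _).trans_eq (hF_mem hξ).symm
    · exact (hF_notMem hξ).ge
  have hgF : ∀ {ξ}, ξ ∈ U → g ξ ≤ F ξ := fun hξ ↦ (le_max_left _ _).trans_eq (hF_mem hξ).symm
  intro t ht ξ η hrank
  have hchord : ∀ s ∈ Icc (0 : ℝ) 1, h (s • ξ + (1 - s) • η) ≤ s * F ξ + (1 - s) * F η := by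
    intro s hs
    have := sub_nonneg.2 hs.2
    have := hs.1
    exact (hh s hs ξ η hrank).trans (by gcongr <;> exact hhF _)
  by_cases htU : t • ξ + (1 - t) • η ∈ U
  swap
  · exact (hF_notMem htU).trans_le (hchord t ht)
  have hexit : ∀ e ∈ Icc (0 : ℝ) 1, F (e • ξ + (1 - e) • η) ≤ e * F ξ + (1 - e) * F η →
      ∃ s ∈ uIcc t e, s • ξ + (1 - s) • η ∈ U ∧
        g (s • ξ + (1 - s) • η) ≤ s * F ξ + (1 - s) * F η := fun e he hFe ↦
    exists_mem_uIcc_le_of_lt_frontier hU hh.continuous hgM hM (γ := fun s ↦ s • ξ + (1 - s) • η)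
      (by fun_prop) (fun s hs ↦ hchord s (uIcc_subset_Icc ht he hs)) htU
      fun heU ↦ (hgF heU).trans hFe
  obtain ⟨a, ha, haU, hga⟩ := hexit 1 (by simp) (by simp)
  obtain ⟨b, hb, hbU, hgb⟩ := hexit 0 (by simp) (by simp)
  rw [uIcc_of_le ht.2] at ha
  rw [uIcc_of_ge ht.1] at hb
  rw [hF_mem htU]
  exact max_le (hg.le_chord hrank hb.2 ha.1 haU hbU hga hgb) (hchord t ht)

end RankOneConvex

section Laminate

variable {X V : Type*} [AddCommGroup V] [Module ℝ V]

/-- The sum `∑ λ_i φ(x_i)` over a list of weighted points `(λ_i, x_i)`. Total mass and barycenter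
are the cases `φ = 1` and `φ = id`. -/
def weightedSum (φ : X → V) (L : List (ℝ × X)) : V := (L.map fun p ↦ p.1 • φ p.2).sum

/-- The list of weighted points in which every weight is multiplied by `c`. -/
def rescale (c : ℝ) (L : List (ℝ × X)) : List (ℝ × X) := L.map fun p ↦ (c * p.1, p.2)

@[simp]
theorem weightedSum_nil (φ : X → V) : weightedSum φ [] = 0 := rfl

@[simp]
theorem weightedSum_cons (φ : X → V) (p : ℝ × X) (L : List (ℝ × X)) :
    weightedSum φ (p :: L) = p.1 • φ p.2 + weightedSum φ L := List.sum_cons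

@[simp]
theorem weightedSum_append (φ : X → V) (L L' : List (ℝ × X)) :
    weightedSum φ (L ++ L') = weightedSum φ L + weightedSum φ L' := by
  simp [weightedSum]

@[simp]
theorem weightedSum_rescale (φ : X → V) (c : ℝ) (L : List (ℝ × X)) :
    weightedSum φ (rescale c L) = c • weightedSum φ L := by
  simp [weightedSum, rescale, Function.comp_def, mul_smul, List.smul_sum]

theorem weightedSum_ofFn (φ : X → V) {I : ℕ} (l : Fin I → ℝ) (x : Fin I → X) :
    weightedSum φ (List.ofFn fun i ↦ (l i, x i)) = ∑ i, l i • φ (x i) := by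
  simp [weightedSum, List.map_ofFn, List.sum_ofFn]

theorem weightedSum_perm (φ : X → V) {L L' : List (ℝ × X)} (h : L.Perm L') :
    weightedSum φ L = weightedSum φ L' := (h.map _).sum_eq

theorem weightedSum_mono {φ ψ : X → ℝ} {L : List (ℝ × X)} (hL : ∀ p ∈ L, 0 < p.1)
    (h : ∀ p ∈ L, φ p.2 ≤ ψ p.2) : weightedSum φ L ≤ weightedSum ψ L :=
  List.sum_le_sum fun p hp ↦ mul_le_mul_of_nonneg_left (h p hp) (hL p hp).le

theorem weightedSum_const_add_mul (c d : ℝ) (φ : X → ℝ) (L : List (ℝ × X)) :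
    weightedSum (fun x ↦ c + d * φ x) L = c * weightedSum (1 : X → ℝ) L + d * weightedSum φ L := by
  induction L with
  | nil => simp
  | cons p L ih => simp [ih]; ring

variable {N n : ℕ} {U : Set (Mat N n)} {x y : Mat N n} {L L' R : List (ℝ × Mat N n)}

theorem HIProp.perm (h : HIProp U L) (hL : L.Perm L') : HIProp U L' := by
  cases h with
  | single l ξ hξ => rw [← List.singleton_perm.1 hL]; exact .single l ξ hξ
  | pair l₁ l₂ ξ₁ ξ₂ h₁ h₂ hrank =>
    rcases List.perm_pair.1 hL.symm with rfl | rfl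
    · exact .pair _ _ _ _ h₁ h₂ hrank
    · exact .pair _ _ _ _ h₂ h₁ (rank_sub_comm ξ₁ ξ₂ ▸ hrank)
  | step _ rest l₁ l₂ ξ₁ ξ₂ hperm hrest h₁ h₂ hrank hrec =>
    exact .step _ rest l₁ l₂ ξ₁ ξ₂ (hL.symm.trans hperm) hrest h₁ h₂ hrank hrec

theorem HIProp.of_merge {l₁ l₂ : ℝ} {ξ₁ ξ₂ : Mat N n} (h₁ : ξ₁ ∈ U) (h₂ : ξ₂ ∈ U)
    (hrank : (ξ₁ - ξ₂).rank = 1)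
    (h : HIProp U ((l₁ + l₂, (l₁ + l₂)⁻¹ • (l₁ • ξ₁ + l₂ • ξ₂)) :: R)) :
    HIProp U ((l₁, ξ₁) :: (l₂, ξ₂) :: R) := by
  rcases eq_or_ne R [] with rfl | hR
  · exact .pair _ _ _ _ h₁ h₂ hrank
  · exact .step _ R _ _ _ _ (.refl _) hR h₁ h₂ hrank h

theorem HIProp.mem (h : HIProp U L) {p : ℝ × Mat N n} (hp : p ∈ L) : p.2 ∈ U := by
  induction h with
  | single => simp_all
  | pair => aesop
  | step L rest l₁ l₂ ξ₁ ξ₂ hperm _ h₁ h₂ _ _ ih =>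
    rcases List.mem_cons.1 (hperm.mem_iff.1 hp) with rfl | hp
    · exact h₁
    rcases List.mem_cons.1 hp with rfl | hp
    · exact h₂
    · exact ih (List.mem_cons_of_mem _ hp)

/-- A finite list of positively weighted points which satisfies `(H_I(U))`, has total mass one and
barycenter `x`: the list form of a laminate of finite order supported in `U`. -/
structure IsLaminate (U : Set (Mat N n)) (x : Mat N n) (L : List (ℝ × Mat N n)) : Prop where
  hiProp : HIProp U L
  pos : ∀ p ∈ L, 0 < p.1
  mass : weightedSum (1 : Mat N n → ℝ) L = 1
  barycenter : weightedSum id L = x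

theorem isLaminate_singleton (hx : x ∈ U) : IsLaminate U x [(1, x)] :=
  ⟨.single 1 x hx, by simp, by simp, by simp⟩

theorem IsLaminate.merge {l₁ l₂ : ℝ} {ξ₁ ξ₂ : Mat N n} (hL : IsLaminate U x L)
    (hperm : L.Perm ((l₁, ξ₁) :: (l₂, ξ₂) :: R))
    (h : HIProp U ((l₁ + l₂, (l₁ + l₂)⁻¹ • (l₁ • ξ₁ + l₂ • ξ₂)) :: R)) :
    IsLaminate U x ((l₁ + l₂, (l₁ + l₂)⁻¹ • (l₁ • ξ₁ + l₂ • ξ₂)) :: R) := by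
  have hpos := fun p hp ↦ hL.pos p (hperm.mem_iff.2 hp)
  simp only [List.forall_mem_cons] at hpos
  obtain ⟨hl₁, hl₂, hR⟩ := hpos
  have hmass := weightedSum_perm (1 : Mat N n → ℝ) hperm
  have hbary := weightedSum_perm id hperm
  rw [hL.mass] at hmass
  rw [hL.barycenter] at hbary
  refine ⟨h, ?_, ?_, ?_⟩
  · simpa using ⟨add_pos hl₁ hl₂, by simpa using hR⟩
  · simpa [add_assoc] using hmass.symm
  · simpa [add_assoc, smul_inv_smul₀ (add_pos hl₁ hl₂).ne'] using hbary.symm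

@[elab_as_elim]
theorem IsLaminate.induction_on {motive : List (ℝ × Mat N n) → Prop} (hL : IsLaminate U x L)
    (perm : ∀ {L L'}, L.Perm L' → motive L → motive L') (single : motive [(1, x)])
    (merge : ∀ {l₁ l₂ ξ₁ ξ₂ R}, 0 < l₁ → 0 < l₂ → ξ₁ ∈ U → ξ₂ ∈ U → (ξ₁ - ξ₂).rank = 1 →
      motive ((l₁ + l₂, (l₁ + l₂)⁻¹ • (l₁ • ξ₁ + l₂ • ξ₂)) :: R) →
      motive ((l₁, ξ₁) :: (l₂, ξ₂) :: R)) : motive L := by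
  obtain ⟨h, hpos, hmass, hbary⟩ := id hL
  induction h with
  | single l ξ =>
    obtain rfl : l = 1 := by simpa using hmass
    obtain rfl : ξ = x := by simpa using hbary
    exact single
  | pair l₁ l₂ ξ₁ ξ₂ h₁ h₂ hrank =>
    have hl : l₁ + l₂ = 1 := by simpa using hmass
    have hx : l₁ • ξ₁ + l₂ • ξ₂ = x := by simpa using hbary
    refine merge (hpos (l₁, ξ₁) (by simp)) (hpos (l₂, ξ₂) (by simp)) h₁ h₂ hrank ?_
    rwa [hl, hx, inv_one, one_smul]
  | step L R l₁ l₂ ξ₁ ξ₂ hperm _ h₁ h₂ hrank hrec ih =>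
    have hmerged := hL.merge hperm hrec
    refine perm hperm.symm (merge ?_ ?_ h₁ h₂ hrank
      (ih hmerged hmerged.pos hmerged.mass hmerged.barycenter))
    · exact hpos (l₁, ξ₁) (hperm.mem_iff.2 (by simp))
    · exact hpos (l₂, ξ₂) (hperm.mem_iff.2 (by simp))

theorem RankOneConvexFun.le_weightedSum {f : Mat N n → ℝ} (hf : RankOneConvexFun f)
    (hL : IsLaminate U x L) : f x ≤ weightedSum f L := by
  refine hL.induction_on (fun hperm ih ↦ ?perm) ?single fun hl₁ hl₂ _ _ hrank ih ↦ ?merge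
  case perm => rwa [← weightedSum_perm f hperm]
  case single => simp
  case merge =>
    have := hf.add_mul_le hrank hl₁ hl₂
    simp only [weightedSum_cons, smul_eq_mul] at ih ⊢
    linarith

theorem IsLaminate.hiProp_rescale_append {c : ℝ} (hL : IsLaminate U x L) (hc : c ≠ 0)
    (h : HIProp U ((c, x) :: R)) : HIProp U (rescale c L ++ R) := by
  refine hL.induction_on (fun hperm ih ↦ ih.perm ((hperm.map _).append_right R))
    (by simpa [rescale] using h) fun {l₁ l₂ ξ₁ ξ₂ _} _ _ h₁ h₂ hrank ih ↦ ?merge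
  case merge =>
    refine .of_merge h₁ h₂ hrank ?_
    have hmid : (c * l₁ + c * l₂)⁻¹ • ((c * l₁) • ξ₁ + (c * l₂) • ξ₂) =
        (l₁ + l₂)⁻¹ • (l₁ • ξ₁ + l₂ • ξ₂) := by
      rw [← mul_add, mul_smul, mul_smul, ← smul_add, smul_smul, mul_inv_rev,
        inv_mul_cancel_right₀ hc]
    rw [hmid, ← mul_add]
    exact ih

theorem IsLaminate.combine (hL : IsLaminate U x L) (hL' : IsLaminate U y L') (hx : x ∈ U)
    (hy : y ∈ U) (hrank : (x - y).rank = 1) {t : ℝ} (ht₀ : 0 < t) (ht₁ : t < 1) :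
    IsLaminate U (t • x + (1 - t) • y) (rescale t L ++ rescale (1 - t) L') where
  hiProp := by
    have ht₁' : 1 - t ≠ 0 := (sub_pos.2 ht₁).ne'
    have hpair : HIProp U [(1 - t, y), (t, x)] :=
      .pair _ _ _ _ hy hx (rank_sub_comm x y ▸ hrank)
    refine hL.hiProp_rescale_append ht₀.ne' ?_
    exact (hL'.hiProp_rescale_append ht₁' hpair).perm (List.perm_append_comm (l₂ := [_]))
  pos := by
    intro p hp
    rcases List.mem_append.1 hp with hp | hp <;> obtain ⟨q, hq, rfl⟩ := List.mem_map.1 hp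
    · exact mul_pos ht₀ (hL.pos q hq)
    · exact mul_pos (sub_pos.2 ht₁) (hL'.pos q hq)
  mass := by simp [hL.mass, hL'.mass]
  barycenter := by simp [hL.barycenter, hL'.barycenter]

theorem IsLaminate.weightedSum_le (hL : IsLaminate U x L) {φ ψ : Mat N n → ℝ}
    (h : ∀ ξ ∈ U, φ ξ ≤ ψ ξ) : weightedSum φ L ≤ weightedSum ψ L :=
  weightedSum_mono hL.pos fun _ hp ↦ h _ (hL.hiProp.mem hp)

theorem IsLaminate.le_weightedSum (hL : IsLaminate U x L) {φ : Mat N n → ℝ} {m : ℝ}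
    (hm : ∀ ξ ∈ U, m ≤ φ ξ) : m ≤ weightedSum φ L := by
  calc m = weightedSum (fun ξ ↦ m + 0 * φ ξ) L := by
        rw [weightedSum_const_add_mul, hL.mass, mul_one, zero_mul, add_zero]
    _ ≤ weightedSum φ L := hL.weightedSum_le (by simpa using hm)

end Laminate

section Envelope

variable {N n : ℕ} {U E S : Set (Mat N n)} {φ : Mat N n → ℝ} {x : Mat N n} {m M δ : ℝ}

/-- The infimum of `∑ λ_i φ(ξ_i)` over the laminates supported in `U` with barycenter `x`: the rank
one convex envelope of `φ` relative to `U`. Where no such laminate exists its value is the junk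
value `sInf ∅ = 0`. -/
noncomputable def laminateEnvelope (U : Set (Mat N n)) (φ : Mat N n → ℝ) (x : Mat N n) : ℝ :=
  sInf (weightedSum φ '' {L | IsLaminate U x L})

theorem laminateEnvelope_le_weightedSum (hm : ∀ ξ ∈ U, m ≤ φ ξ) {L : List (ℝ × Mat N n)}
    (hL : IsLaminate U x L) : laminateEnvelope U φ x ≤ weightedSum φ L :=
  csInf_le ⟨m, forall_mem_image.2 fun _ hL ↦ hL.le_weightedSum hm⟩ (mem_image_of_mem _ hL)

theorem laminateEnvelope_le (hm : ∀ ξ ∈ U, m ≤ φ ξ) (hx : x ∈ U) :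
    laminateEnvelope U φ x ≤ φ x := by
  simpa using laminateEnvelope_le_weightedSum hm (isLaminate_singleton hx)

theorem exists_isLaminate_weightedSum_lt (hx : x ∈ U) (hδ : laminateEnvelope U φ x < δ) :
    ∃ L, IsLaminate U x L ∧ weightedSum φ L < δ := by
  obtain ⟨_, ⟨L, hL, rfl⟩, hLδ⟩ :=
    exists_lt_of_csInf_lt (Nonempty.image _ ⟨_, isLaminate_singleton hx⟩) hδ
  exact ⟨L, hL, hLδ⟩

theorem rankOneConvexFunOn_laminateEnvelope (hm : ∀ ξ ∈ U, m ≤ φ ξ) :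
    RankOneConvexFunOn U (laminateEnvelope U φ) := by
  intro t ht x hx y hy hrank
  rcases ht.1.eq_or_lt with rfl | ht₀
  · simp
  rcases ht.2.eq_or_lt with rfl | ht₁
  · simp
  refine le_of_forall_pos_le_add fun δ hδ ↦ ?_
  obtain ⟨L, hL, hLδ⟩ := exists_isLaminate_weightedSum_lt hx (lt_add_of_pos_right _ hδ)
  obtain ⟨L', hL', hLδ'⟩ := exists_isLaminate_weightedSum_lt hy (lt_add_of_pos_right _ hδ)
  have := sub_nonneg.2 ht₁.le
  calc laminateEnvelope U φ (t • x + (1 - t) • y)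
      ≤ weightedSum φ (rescale t L ++ rescale (1 - t) L') :=
        laminateEnvelope_le_weightedSum hm (hL.combine hL' hx hy hrank ht₀ ht₁)
    _ = t * weightedSum φ L + (1 - t) * weightedSum φ L' := by simp
    _ ≤ t * (laminateEnvelope U φ x + δ) + (1 - t) * (laminateEnvelope U φ y + δ) := by gcongr
    _ = t * laminateEnvelope U φ x + (1 - t) * laminateEnvelope U φ y + δ := by ring

theorem laminateEnvelope_nonpos_of_mem_RcoF (hU : IsOpen U) (hUb : Bornology.IsBounded U)
    (hEU : RcoF E ⊆ U) (hm : ∀ ξ ∈ U, m ≤ φ ξ) (hM : ∀ ξ ∈ U, φ ξ ≤ M) (hφ : ∀ η ∈ E, φ η ≤ 0)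
    (hx : x ∈ RcoF E) : laminateEnvelope U φ x ≤ 0 := by
  have hfrontier : IsCompact (frontier U) :=
    hUb.isCompact_closure.of_isClosed_subset isClosed_frontier frontier_subset_closure
  obtain ⟨h, hh, hhE, hhM⟩ := exists_rankOneConvexFun_lt_of_disjoint_RcoF hfrontier
    ((disjoint_frontier_iff_isOpen.2 hU).mono_right hEU) M
  have hglue := (rankOneConvexFunOn_laminateEnvelope hm).glue hU
    (fun ξ hξ ↦ (laminateEnvelope_le hm hξ).trans (hM ξ hξ)) hh hhM
  have hx_glue := hx _ hglue fun η hη ↦ by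
    have hηU : η ∈ U := hEU (subset_RcoF E hη)
    rw [piecewise_eq_of_mem _ _ _ hηU]
    exact max_le ((laminateEnvelope_le hm hηU).trans (hφ η hη)) (hhE η hη)
  rw [piecewise_eq_of_mem _ _ _ (hEU hx)] at hx_glue
  exact (le_max_left _ _).trans hx_glue

theorem exists_isLaminate_of_mem_RcoF (hU : IsOpen U) (hUb : Bornology.IsBounded U)
    (hEU : RcoF E ⊆ U) (hES : E ⊆ S) (hx : x ∈ RcoF E) (hδ : 0 < δ) :
    ∃ L, IsLaminate U x L ∧ weightedSum (Sᶜ.indicator (1 : Mat N n → ℝ)) L < δ := by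
  refine exists_isLaminate_weightedSum_lt (hEU hx) (lt_of_le_of_lt ?_ hδ)
  refine laminateEnvelope_nonpos_of_mem_RcoF (m := 0) (M := 1) hU hUb hEU ?_ ?_ ?_ hx
  · exact fun ξ _ ↦ indicator_nonneg (fun _ _ ↦ zero_le_one) ξ
  · exact fun ξ _ ↦ indicator_le_self' (fun _ _ ↦ zero_le_one) ξ
  · exact fun η hη ↦ (indicator_of_notMem (not_not_intro (hES hη)) _).le

theorem mem_RcoF_of_forall_exists_isLaminate (hUb : Bornology.IsBounded U)
    (hEb : Bornology.IsBounded E) (hx : ∀ ε > 0, ∃ L, IsLaminate U x L ∧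
      weightedSum ((thickening ε E)ᶜ.indicator (1 : Mat N n → ℝ)) L < ε) : x ∈ RcoF E := by
  intro f hf hfE
  refine le_of_forall_pos_le_add fun δ hδ ↦ ?_
  obtain ⟨M, hM₀, hM⟩ : ∃ M > 0, ∀ ξ ∈ U, f ξ ≤ M := by
    obtain ⟨M, hM⟩ := hUb.isCompact_closure.bddAbove_image hf.continuous.continuousOn
    exact ⟨max M 1, by positivity,
      fun ξ hξ ↦ le_max_of_le_left (hM (mem_image_of_mem f (subset_closure hξ)))⟩
  obtain ⟨ε, _, hεδ⟩ : ∃ ε > 0, thickening ε (closure E) ⊆ {ξ | f ξ < δ / 2} := by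
    have hclosure : closure E ⊆ {ξ | f ξ ≤ 0} :=
      closure_minimal hfE (isClosed_le hf.continuous continuous_const)
    exact hEb.isCompact_closure.exists_thickening_subset_open
      (isOpen_lt hf.continuous continuous_const) fun ξ hξ ↦ (hclosure hξ).trans_lt (half_pos hδ)
  obtain ⟨L, hL, hLε⟩ := hx (min ε (δ / 2 / M)) (by positivity)
  set far : Mat N n → ℝ := (thickening (min ε (δ / 2 / M)) E)ᶜ.indicator 1
  have hf_le : ∀ ξ ∈ U, f ξ ≤ δ / 2 + M * far ξ := by
    intro ξ hξU
    by_cases hξ : ξ ∈ thickening (min ε (δ / 2 / M)) E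
    · have hfar : far ξ = 0 := indicator_of_notMem (not_not_intro hξ) _
      rw [hfar, mul_zero, add_zero]
      exact (hεδ (thickening_subset_of_subset ε subset_closure
        (thickening_mono (min_le_left _ _) E hξ))).le
    · have hfar : far ξ = 1 := indicator_of_mem hξ _
      rw [hfar, mul_one]
      linarith [hM ξ hξU]
  calc f x ≤ weightedSum f L := hf.le_weightedSum hL
    _ ≤ weightedSum (fun ξ ↦ δ / 2 + M * far ξ) L := hL.weightedSum_le hf_le
    _ = δ / 2 + M * weightedSum far L := by rw [weightedSum_const_add_mul, hL.mass, mul_one]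
    _ ≤ δ / 2 + M * (δ / 2 / M) := by gcongr; exact hLε.le.trans (min_le_right _ _)
    _ = 0 + δ := by field_simp; ring

theorem mem_RcoF_iff_forall_exists_isLaminate (hU : IsOpen U) (hUb : Bornology.IsBounded U)
    (hEU : RcoF E ⊆ U) : x ∈ RcoF E ↔ ∀ ε > 0, ∃ L, IsLaminate U x L ∧
      weightedSum ((thickening ε E)ᶜ.indicator (1 : Mat N n → ℝ)) L < ε :=
  ⟨fun hx _ hε ↦
    exists_isLaminate_of_mem_RcoF hU hUb hEU (self_subset_thickening hε E) hx hε,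
    mem_RcoF_of_forall_exists_isLaminate hUb (hUb.subset ((subset_RcoF E).trans hEU))⟩

theorem exists_isLaminate_indicator_lt_iff :
    (∃ L, IsLaminate U x L ∧ weightedSum (Sᶜ.indicator (1 : Mat N n → ℝ)) L < δ) ↔
      ∃ (I : ℕ) (l : Fin I → ℝ) (ξs : Fin I → Mat N n),
        (∀ i, 0 < l i) ∧ ∑ i, l i = 1 ∧ SatisfiesH U I l ξs ∧ x = ∑ i, l i • ξs i ∧
          ∑ i ∈ Finset.univ.filter (fun i ↦ ξs i ∉ S), l i < δ := by
  have hfar : ∀ {I : ℕ} (l : Fin I → ℝ) (ξs : Fin I → Mat N n),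
      weightedSum (Sᶜ.indicator (1 : Mat N n → ℝ)) (List.ofFn fun i ↦ (l i, ξs i)) =
        ∑ i ∈ Finset.univ.filter (fun i ↦ ξs i ∉ S), l i := fun l ξs ↦ by
    simp [weightedSum_ofFn, Finset.sum_filter, indicator_apply]
  constructor
  · rintro ⟨L, hL, hLδ⟩
    have hofFn : (List.ofFn fun i ↦ ((L.get i).1, (L.get i).2)) = L := List.ofFn_get L
    refine ⟨L.length, fun i ↦ (L.get i).1, fun i ↦ (L.get i).2,
      fun i ↦ hL.pos _ (L.get_mem i), ?_, ?_, ?_, ?_⟩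
    · have h := congrArg (weightedSum (1 : Mat N n → ℝ)) hofFn
      rw [weightedSum_ofFn, hL.mass] at h
      simpa only [Pi.one_apply, smul_eq_mul, mul_one] using h
    · simpa only [SatisfiesH, hofFn] using hL.hiProp
    · have h := congrArg (weightedSum id) hofFn
      rw [weightedSum_ofFn, hL.barycenter] at h
      exact h.symm
    · rwa [← hfar, hofFn]
  · rintro ⟨I, l, ξs, hpos, hmass, hH, rfl, hδ⟩
    refine ⟨_, ⟨hH, ?_, ?_, ?_⟩, (hfar l ξs).trans_lt hδ⟩
    · exact (List.forall_mem_ofFn_iff ..).2 hpos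
    · simpa [weightedSum_ofFn] using hmass
    · simp [weightedSum_ofFn]

end Envelope

theorem stmt0_general {N n : ℕ} (E U : Set (Mat N n)) (hUopen : IsOpen U)
    (hUbd : Bornology.IsBounded U) (hRU : RcoF E ⊆ U) :
    RcoF E = {ξ : Mat N n | ∀ ε > 0, ∃ (I : ℕ) (l : Fin I → ℝ) (ξs : Fin I → Mat N n),
      (∀ i, 0 < l i) ∧ ∑ i, l i = 1 ∧ SatisfiesH U I l ξs ∧
      ξ = ∑ i, l i • ξs i ∧
      ∑ i ∈ Finset.univ.filter (fun i => ξs i ∉ Metric.thickening ε E), l i < ε} := by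
  ext ξ
  simp only [mem_RcoF_iff_forall_exists_isLaminate hUopen hUbd hRU,
    exists_isLaminate_indicator_lt_iff, mem_ofPred_eq]

theorem stmt0 {N n : ℕ} (E : Set (Mat N n)) (hE : IsCompact E)
    (U : Set (Mat N n)) (hUopen : IsOpen U) (hUbd : Bornology.IsBounded U)
    (hRU : RcoF E ⊆ U) :
    RcoF E = {ξ : Mat N n | ∀ ε > 0, ∃ (I : ℕ) (l : Fin I → ℝ) (ξs : Fin I → Mat N n),
      (∀ i, 0 < l i) ∧ ∑ i, l i = 1 ∧ SatisfiesH U I l ξs ∧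
      ξ = ∑ i, l i • ξs i ∧
      ∑ i ∈ Finset.univ.filter (fun i => ξs i ∉ Metric.thickening ε E), l i < ε} :=
  stmt0_general E U hUopen hUbd hRU

end Statements
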